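/- Let A and V be bounded self-adjoint operators on H. Suppose spectrum(A) = ω ∪ Ω for nonempty closed sets ω, Ω with d := dist(ω, Ω) > 0, and assume ‖V‖ < (sinh(1)/e) · d, where sinh(1)/e = (1 − e^{−2})/2. Let P be the spectral projection of A associated with ω, and let Q be the unique orthogonal projection commuting with A + V such that the spectrum of the restriction of A + V to Ran Q is contained in the open d/2-neighborhood O_{d/2}(ω) of ω and the spectrum of the restriction of A + V to ker Q is contained in O_{d/2}(Ω). Then ‖P − Q‖ ≤ sin( (π/4) · log( d / (d − 2‖V‖) ) ) < 1. -/

import Mathlib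

open ContinuousLinearMap

/-- The spectral projection of a bounded self-adjoint operator `B` associated with a part `ω`
of its spectrum that is separated from the rest: it is obtained by applying the continuous
functional calculus to the indicator function of `ω`. It is the unique orthogonal projection
commuting with `B` such that the spectrum of the restriction of `B` to its range is contained
in `ω` and the spectrum of the restriction of `B` to its kernel is contained in the complement
part. -/
noncomputable def spectralProj {H : Type*} [NormedAddCommGroup H] [InnerProductSpace ℂ H]
    [CompleteSpace H] (B : H →L[ℂ] H) (ω : Set ℝ) : H →L[ℂ] H :=
  cfc (Set.indicator ω (fun _ => (1:ℝ))) B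

/-- The distance `dist(s,t) = inf{|x − y| : x ∈ s, y ∈ t}` between two sets of reals. -/
noncomputable def setDist (s t : Set ℝ) : ℝ :=
  sInf (Set.image2 dist s t)

/-- A family of sets `{ω_t}_{t ∈ I}` is upper semicontinuous on `I` if for every `t ∈ I` and
`ε > 0` there is `δ > 0` such that `sup_{λ ∈ ω_s} dist(λ, ω_t) < ε` (i.e. `ω_s` is contained
in the open `ε`-neighborhood of `ω_t`) whenever `s ∈ I` and `|s − t| < δ`. -/
def UpperSemicontinuousFamilyOn (ω : ℝ → Set ℝ) (I : Set ℝ) : Prop :=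
  ∀ t ∈ I, ∀ ε > (0:ℝ), ∃ δ > (0:ℝ), ∀ s ∈ I, |s - t| < δ →
    ω s ⊆ Metric.thickening ε (ω t)

/-!
Mixing centred Cauchy densities gives a measure `ν` on `ℝ` with `∫ |sin t| dν = π / 2` and
`∫ sin t · e^{ist} dν = i / s` for `|s| ≥ 1` (Sz.-Nagy). Dividing `x - y` out of spectral
resolutions of `A` and `B` with this formula yields `δ ‖E_A(S) X E_B(T)‖ ≤ (π / 2) ‖AX - XB‖`
for `δ`-separated parts `S` and `T` of the two spectra.

Along the path `A + tV` the perturbed parts `ω_t` and `Ω_t` stay `d - 2t‖V‖` apart, so the spectral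
projection moves at speed at most `(π / 2) ‖V‖ / (d - 2t‖V‖)`. Integrating norms would only bound
`‖P - Q‖` by the length of the path. But `arcsin ‖P - Q‖`, the maximal angle between the ranges, is
itself a metric on orthogonal projections and is infinitesimally equal to the norm, so the length
`(π / 4) log (d / (d - 2‖V‖))` bounds the angle as well. It is less than `π / 2` exactly when
`‖V‖ < (sinh 1 / e) d`.
-/

open MeasureTheory Set Real Filter Topology
open scoped FourierTransform ENNReal

section Cauchy

variable {r : ℝ}

/-- The density `r / (π (r² + t²))` of the centred Cauchy distribution of scale `r`, with
arguments in the order in which it is integrated against another weight in the scale. -/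
noncomputable def cauchyDensity (r t : ℝ) : ℝ :=
  π⁻¹ * (r / (r ^ 2 + t ^ 2))

lemma cauchyDensity_nonneg (hr : 0 < r) (t : ℝ) : 0 ≤ cauchyDensity r t := by
  unfold cauchyDensity; positivity

lemma integrable_cauchyDensity (r : ℝ) : Integrable (cauchyDensity r) := by
  rcases eq_or_ne r 0 with rfl | hr
  · simp [funext fun t => show cauchyDensity 0 t = 0 by simp [cauchyDensity]]
  · refine ((integrable_inv_one_add_sq.comp_div hr).const_mul (π⁻¹ * r⁻¹)).congr
      (.of_forall fun t => ?_)
    simp only [cauchyDensity]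
    field_simp

lemma integrable_exp_neg_mul_abs (hr : 0 < r) : Integrable fun t : ℝ => rexp (-(r * |t|)) := by
  rw [← integrableOn_univ, ← Iic_union_Ioi (a := (0 : ℝ)), integrableOn_union]
  constructor
  · refine (integrableOn_exp_mul_Iic hr 0).congr_fun (fun t ht => ?_) measurableSet_Iic
    simp [abs_of_nonpos (mem_Iic.1 ht)]
  · refine (integrableOn_exp_mul_Ioi (neg_lt_zero.2 hr) 0).congr_fun (fun t ht => ?_)
      measurableSet_Ioi
    simp [abs_of_pos (mem_Ioi.1 ht)]

lemma integral_cexp_neg_mul_abs_add (hr : 0 < r) (a : ℝ) :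
    ∫ t : ℝ, Complex.exp (-(r * |t|) + a * t * Complex.I) = 2 * π * cauchyDensity r a := by
  have hint : Integrable fun t : ℝ => Complex.exp (-(r * |t|) + a * t * Complex.I) := by
    refine (integrable_exp_neg_mul_abs hr).mono' (Continuous.aestronglyMeasurable (by fun_prop))
      (.of_forall fun t => ?_)
    simp [Complex.norm_exp]
  have hIic : ∫ t in Iic (0 : ℝ), Complex.exp (-(r * |t|) + a * t * Complex.I) =
      ∫ t in Iic (0 : ℝ), Complex.exp ((r + a * Complex.I) * t) := by
    refine setIntegral_congr_fun measurableSet_Iic fun t ht => ?_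
    simp only [abs_of_nonpos (mem_Iic.1 ht)]
    push_cast; ring_nf
  have hIoi : ∫ t in Ioi (0 : ℝ), Complex.exp (-(r * |t|) + a * t * Complex.I) =
      ∫ t in Ioi (0 : ℝ), Complex.exp ((-r + a * Complex.I) * t) := by
    refine setIntegral_congr_fun measurableSet_Ioi fun t ht => ?_
    simp only [abs_of_pos (mem_Ioi.1 ht)]
    ring_nf
  have hne (x : ℝ) (hx : x ≠ 0) : (x + a * Complex.I : ℂ) ≠ 0 := fun h =>
    hx (by simpa using congrArg Complex.re h)
  have hne₁ := hne r hr.ne'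
  have hne₂ := hne (-r) (neg_ne_zero.2 hr.ne')
  have hne₃ : (r ^ 2 + a ^ 2 : ℂ) ≠ 0 := by exact_mod_cast (by positivity : r ^ 2 + a ^ 2 ≠ 0)
  have hπ : (π : ℂ) ≠ 0 := by exact_mod_cast pi_ne_zero
  rw [← intervalIntegral.integral_Iic_add_Ioi (b := 0) hint.integrableOn hint.integrableOn,
    hIic, hIoi, integral_exp_mul_complex_Iic (by simpa using hr),
    integral_exp_mul_complex_Ioi (by simpa using hr)]
  push_cast at hne₂
  simp only [cauchyDensity, Complex.ofReal_zero, mul_zero, Complex.exp_zero, Complex.ofReal_mul,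
    Complex.ofReal_inv, Complex.ofReal_div, Complex.ofReal_add, Complex.ofReal_pow]
  field_simp
  linear_combination (-(2:ℂ) * a ^ 2 * r) * Complex.I_sq

lemma integral_cauchyDensity_mul_cexp (hr : 0 < r) (s : ℝ) :
    ∫ t : ℝ, (cauchyDensity r t : ℂ) * Complex.exp (s * t * Complex.I) = rexp (-(r * |s|)) := by
  set f : ℝ → ℂ := fun t => rexp (-(2 * π * r * |t|)) with hf
  have hcont : Continuous f := by fun_prop
  have hint : Integrable f := (integrable_exp_neg_mul_abs (by positivity)).ofReal
  have hfourier : 𝓕 f = fun t => (cauchyDensity r t : ℂ) := by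
    ext w
    rw [Real.fourier_real_eq_integral_exp_smul]
    trans ∫ t : ℝ, Complex.exp
      (-((2 * π * r : ℝ) * |t|) + ((-(2 * π * w) : ℝ) : ℂ) * t * Complex.I)
    · refine integral_congr_ae (.of_forall fun t => ?_)
      simp only [hf, smul_eq_mul, Complex.ofReal_exp, ← Complex.exp_add]
      push_cast; ring_nf
    · rw [integral_cexp_neg_mul_abs_add (by positivity)]
      norm_cast
      simp only [cauchyDensity]
      field_simp
  have hinv := congrFun (hcont.fourierInv_fourier_eq hint
    (hfourier ▸ (integrable_cauchyDensity r).ofReal)) (s / (2 * π))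
  rw [hfourier, Real.fourierInv_eq'] at hinv
  convert hinv using 1
  · refine integral_congr_ae (.of_forall fun t => ?_)
    simp only [smul_eq_mul]
    rw [mul_comm]
    congr 2
    simp only [Real.inner_apply, Complex.ofReal_mul]
    push_cast
    field_simp
  · simp only [hf, abs_div, abs_mul, abs_two, abs_of_pos pi_pos]
    congr 3
    field_simp

end Cauchy

section AbsSin

lemma integral_cexp_mul_sin (n : ℤ) :
    ∫ t in (0 : ℝ)..π, Complex.exp (-(2 * n * t * Complex.I)) * sin t = 2 / (1 - 4 * n ^ 2) := by
  set c : ℂ := -(2 * n * Complex.I) with hc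
  have hc2 : c ^ 2 + 1 = 1 - 4 * n ^ 2 := by
    rw [hc]; linear_combination (4 * n ^ 2 : ℂ) * Complex.I_sq
  have hne : (1 - 4 * n ^ 2 : ℂ) ≠ 0 := by
    have : (1 - 4 * n ^ 2 : ℤ) ≠ 0 := by omega
    exact_mod_cast this
  have hderiv (t : ℝ) : HasDerivAt (fun t : ℝ => Complex.exp (c * t) * (c * sin t - cos t))
      ((c ^ 2 + 1) * (Complex.exp (c * t) * sin t)) t := by
    have hexp : HasDerivAt (fun t : ℝ => Complex.exp (c * t)) (Complex.exp (c * t) * c) t := by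
      simpa using ((hasDerivAt_id (t : ℂ)).const_mul c).cexp.comp_ofReal
    refine (hexp.mul ((((hasDerivAt_sin t).ofReal_comp).const_mul c).sub
      (hasDerivAt_cos t).ofReal_comp)).congr_deriv ?_
    simp only [Pi.sub_apply]; push_cast; ring
  have hend : Complex.exp (c * π) = 1 := by
    rw [hc, show -(2 * n * Complex.I) * π = ((-n : ℤ) : ℂ) * (2 * π * Complex.I) by
      push_cast; ring, Complex.exp_int_mul_two_pi_mul_I]
  have hftc := intervalIntegral.integral_eq_sub_of_hasDerivAt (a := 0) (b := π)
    (fun t _ => hderiv t) (Continuous.intervalIntegrable (by fun_prop) _ _)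
  rw [intervalIntegral.integral_const_mul, hc2] at hftc
  rw [eq_div_iff hne, mul_comm]
  convert hftc using 1
  · simp only [hc]; congr 2; ext t; ring_nf
  · simp only [hend, Complex.ofReal_zero, mul_zero, Complex.exp_zero, sin_pi, sin_zero, cos_pi,
      cos_zero, Complex.ofReal_neg, Complex.ofReal_one]
    norm_num

lemma summable_inv_one_sub_four_mul_sq : Summable fun n : ℤ => (1 - 4 * (n : ℝ) ^ 2)⁻¹ := by
  refine (Real.summable_one_div_int_pow.2 one_lt_two).of_norm_bounded_eventually ?_
  filter_upwards [(finite_singleton (0 : ℤ)).compl_mem_cofinite] with n hn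
  have hn1 : (1 : ℝ) ≤ n ^ 2 := by
    exact_mod_cast Int.one_le_abs (pow_ne_zero 2 (by simpa using hn)) |>.trans_eq (abs_sq _)
  rw [norm_inv, Real.norm_eq_abs, one_div, abs_sub_comm, abs_of_nonneg (by linarith)]
  exact inv_anti₀ (by linarith) (by linarith)

lemma hasSum_abs_sin (t : ℝ) :
    HasSum (fun n : ℤ =>
      (2 / π * (1 - 4 * (n : ℝ) ^ 2)⁻¹ : ℝ) * Complex.exp (2 * n * t * Complex.I))
      (|sin t| : ℝ) := by
  have : Fact (0 < π) := ⟨pi_pos⟩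
  have hper : Function.Periodic (fun t : ℝ => ((|sin t| : ℝ) : ℂ)) π := fun t => by
    simp [sin_add_pi]
  have hcont : Continuous fun t : ℝ => ((|sin t| : ℝ) : ℂ) := by fun_prop
  let f : C(AddCircle π, ℂ) := ⟨hper.lift, continuous_coinduced_dom.2 hcont⟩
  have hcoeff (n : ℤ) : fourierCoeff f n = (2 / π * (1 - 4 * (n : ℝ) ^ 2)⁻¹ : ℝ) := by
    rw [fourierCoeff_eq_intervalIntegral f n 0, zero_add]
    have : ∫ x in (0 : ℝ)..π, fourier (-n) (x : AddCircle π) • f x = 2 / (1 - 4 * n ^ 2) := by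
      rw [← integral_cexp_mul_sin]
      refine intervalIntegral.integral_congr fun x hx => ?_
      rw [uIcc_of_le pi_pos.le] at hx
      have hπ : (π : ℂ) ≠ 0 := by exact_mod_cast pi_ne_zero
      simp only [fourier_coe_apply, smul_eq_mul]
      congr 2
      · push_cast; field_simp
      · exact congrArg Complex.ofReal (abs_of_nonneg (sin_nonneg_of_mem_Icc hx))
    rw [this, Complex.real_smul]
    push_cast; ring
  have hsum : Summable (fourierCoeff f) := by
    simp only [funext hcoeff]
    exact Complex.summable_ofReal.2 (summable_inv_one_sub_four_mul_sq.mul_left (2 / π))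
  convert has_pointwise_sum_fourier_series_of_summable hsum (t : AddCircle π) using 1
  · ext n
    rw [hcoeff, fourier_coe_apply, smul_eq_mul]
    have hπ : (π : ℂ) ≠ 0 := by exact_mod_cast pi_ne_zero
    congr 2
    field_simp
  · exact (hper.lift_coe t).symm

lemma summable_exp_neg_odd_div {r : ℝ} (hr : 0 < r) :
    Summable fun k : ℕ => rexp (-((2 * k + 1) * r)) / (2 * k + 1) := by
  have hx : |rexp (-r)| < 1 := by simpa [abs_exp] using hr
  refine ((hasSum_log_sub_log_of_abs_lt_one hx).summable.mul_left (1 / 2)).congr fun k => ?_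
  rw [← exp_nat_mul]
  push_cast
  ring_nf

lemma hasSum_exp_neg_mul_abs_div {r : ℝ} (hr : 0 < r) :
    HasSum (fun n : ℤ => rexp (-(r * |2 * (n : ℝ)|)) * (1 - 4 * (n : ℝ) ^ 2)⁻¹)
      (2 * sinh r * ∑' k : ℕ, rexp (-((2 * k + 1) * r)) / (2 * k + 1)) := by
  set g : ℤ → ℝ := fun n => rexp (-(r * |2 * (n : ℝ)|)) / (2 * n + 1) with hg
  have hsum (c : ℝ) : Summable fun k : ℕ => c * rexp (-((2 * k + 1) * r)) / (2 * k + 1) := by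
    simpa only [mul_div_assoc] using (summable_exp_neg_odd_div hr).mul_left c
  have hpos (k : ℕ) : g k = rexp r * rexp (-((2 * k + 1) * r)) / (2 * k + 1) := by
    rw [hg, ← exp_add]
    simp only [Int.cast_natCast, abs_of_nonneg (by positivity : (0 : ℝ) ≤ 2 * k)]
    ring_nf
  have hneg (k : ℕ) : g (-(k + 1)) = -rexp (-r) * rexp (-((2 * k + 1) * r)) / (2 * k + 1) := by
    rw [neg_mul, hg, ← exp_add]
    have habs : |2 * (-((k : ℝ) + 1))| = 2 * (k + 1) := by
      rw [mul_neg, abs_neg, abs_of_nonneg (by positivity)]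
    push_cast
    rw [habs, neg_div, ← div_neg]
    ring_nf
  have hsumg : HasSum g (2 * sinh r * ∑' k : ℕ, rexp (-((2 * k + 1) * r)) / (2 * k + 1)) := by
    convert HasSum.of_nat_of_neg_add_one (((hsum _).congr fun k => (hpos k).symm).hasSum)
      (((hsum _).congr fun k => (hneg k).symm).hasSum) using 1
    simp only [hpos, hneg, mul_div_assoc, tsum_mul_left]
    rw [sinh_eq]
    ring
  have hsymm (n : ℤ) : rexp (-(r * |2 * (n : ℝ)|)) * (1 - 4 * (n : ℝ) ^ 2)⁻¹ =
      1 / 2 * (g n + g (-n)) := by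
    have h1 : (2 * n + 1 : ℝ) ≠ 0 := by exact_mod_cast (by omega : (2 * n + 1 : ℤ) ≠ 0)
    have h2 : (-(2 * n) + 1 : ℝ) ≠ 0 := by exact_mod_cast (by omega : (-(2 * n) + 1 : ℤ) ≠ 0)
    have h3 : (1 - 4 * n ^ 2 : ℝ) = (2 * n + 1) * (-(2 * n) + 1) := by ring
    simp only [hg, Int.cast_neg, h3, mul_neg, abs_neg]
    field_simp
    ring
  simp only [hsymm]
  have hhalf := ((hsumg.add ((Equiv.neg ℤ).hasSum_iff.2 hsumg)).mul_left (1 / 2))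
  rwa [one_div_mul_eq_div, add_self_div_two] at hhalf

lemma integral_abs_sin_mul_cauchyDensity {r : ℝ} (hr : 0 < r) :
    ∫ t : ℝ, |sin t| * cauchyDensity r t =
      4 / π * sinh r * ∑' k : ℕ, rexp (-((2 * k + 1) * r)) / (2 * k + 1) := by
  set c : ℤ → ℝ := fun n => 2 / π * (1 - 4 * (n : ℝ) ^ 2)⁻¹
  set F : ℤ → ℝ → ℂ := fun n t =>
    c n * ((cauchyDensity r t : ℂ) * Complex.exp ((2 * n : ℝ) * t * Complex.I))
  have hnorm (n : ℤ) (t : ℝ) : ‖F n t‖ = |c n| * cauchyDensity r t := by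
    simp only [F, norm_mul, ← Complex.ofReal_mul, Complex.norm_exp_ofReal_mul_I,
      Complex.norm_real, mul_one, Real.norm_eq_abs, abs_of_nonneg (cauchyDensity_nonneg hr t)]
  have hF (n : ℤ) : Integrable (F n) := by
    refine ((integrable_cauchyDensity r).const_mul |c n|).mono' ?_
      (.of_forall fun t => (hnorm n t).le)
    refine ((integrable_cauchyDensity r).ofReal.aestronglyMeasurable.mul
      (Continuous.aestronglyMeasurable ?_)).const_mul _
    fun_prop
  have hsum : Summable fun n => ∫ t, ‖F n t‖ := by
    simp only [hnorm, integral_const_mul]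
    exact (summable_inv_one_sub_four_mul_sq.mul_left _).abs.mul_right _
  have hlim := hasSum_integral_of_summable_integral_norm hF hsum
  have hterm (n : ℤ) : ∫ t, F n t =
      ((2 / π * (rexp (-(r * |2 * (n : ℝ)|)) * (1 - 4 * (n : ℝ) ^ 2)⁻¹) : ℝ) : ℂ) := by
    simp only [F, integral_const_mul, integral_cauchyDensity_mul_cexp hr]
    simp only [c]
    push_cast; ring
  have hpoint (t : ℝ) : ∑' n, F n t = ((|sin t| * cauchyDensity r t : ℝ) : ℂ) := by
    rw [Complex.ofReal_mul, ← ((hasSum_abs_sin t).mul_right _).tsum_eq]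
    refine tsum_congr fun n => ?_
    simp only [F, c]
    push_cast; ring_nf
  simp only [hpoint, hterm, integral_complex_ofReal, Complex.hasSum_ofReal] at hlim
  rw [hlim.unique ((hasSum_exp_neg_mul_abs_div hr).mul_left (2 / π))]
  ring

end AbsSin

section SzNagyMeasure

/-- The measure `ν` with density `t ↦ ∫₀^∞ r / (π (r² + t²) sinh r) dr`, a mixture of centred
Cauchy distributions. It is normalised so that `∫ sin t · e^{ist} dν = i / s` whenever `1 ≤ |s|`;
that is, `-sin t · dν` is Sz.-Nagy's extremal kernel for the operator equation `AX - XB = Y`. -/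
noncomputable def szNagyMeasure : Measure ℝ :=
  (((volume.restrict (Ioi 0)).prod volume).withDensity
    fun p : ℝ × ℝ => ENNReal.ofReal (cauchyDensity p.1 p.2 / sinh p.1)).map Prod.snd

lemma measurable_ofReal_cauchyDensity_div_sinh :
    Measurable fun p : ℝ × ℝ => ENNReal.ofReal (cauchyDensity p.1 p.2 / sinh p.1) := by
  unfold cauchyDensity
  fun_prop

lemma lintegral_szNagyMeasure {g : ℝ → ℝ≥0∞} (hg : Measurable g) :
    ∫⁻ t, g t ∂szNagyMeasure =
      ∫⁻ r in Ioi 0, ∫⁻ t, ENNReal.ofReal (cauchyDensity r t / sinh r) * g t := by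
  have hκ := measurable_ofReal_cauchyDensity_div_sinh
  rw [szNagyMeasure, lintegral_map hg measurable_snd]
  refine (lintegral_withDensity_eq_lintegral_mul _ hκ (hg.comp measurable_snd)).trans ?_
  exact lintegral_prod _ (hκ.mul (hg.comp measurable_snd)).aemeasurable

lemma integral_szNagyMeasure {g : ℝ → ℂ} (hg : Integrable g szNagyMeasure) :
    ∫ t, g t ∂szNagyMeasure =
      ∫ r in Ioi 0, (sinh r : ℂ)⁻¹ * ∫ t, (cauchyDensity r t : ℂ) * g t := by
  have hκ := measurable_ofReal_cauchyDensity_div_sinh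
  have hfin : ∀ᵐ p : ℝ × ℝ ∂(volume.restrict (Ioi 0)).prod volume,
      ENNReal.ofReal (cauchyDensity p.1 p.2 / sinh p.1) < ∞ :=
    .of_forall fun _ => ENNReal.ofReal_lt_top
  have hg' : Integrable (fun p : ℝ × ℝ => g p.2) _ := hg.comp_measurable measurable_snd
  rw [integrable_withDensity_iff_integrable_smul' hκ hfin] at hg'
  rw [szNagyMeasure, integral_map measurable_snd.aemeasurable hg.aestronglyMeasurable,
    integral_withDensity_eq_integral_toReal_smul hκ hfin, integral_prod _ hg']
  refine setIntegral_congr_fun measurableSet_Ioi fun r hr => ?_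
  simp only [← integral_const_mul]
  refine integral_congr_ae (.of_forall fun t => ?_)
  have hnonneg : 0 ≤ cauchyDensity r t / sinh r :=
    div_nonneg (cauchyDensity_nonneg hr t) (sinh_pos_iff.2 hr).le
  simp only [ENNReal.toReal_ofReal hnonneg, Complex.real_smul]
  push_cast; ring

lemma hasSum_inv_odd_sq : HasSum (fun k : ℕ => ((2 * k + 1 : ℝ) ^ 2)⁻¹) (π ^ 2 / 8) := by
  set f : ℕ → ℝ := fun n => 1 / (n : ℝ) ^ 2 with hf
  have heven : HasSum (fun k : ℕ => f (2 * k)) (1 / 4 * (π ^ 2 / 6)) := by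
    have hterm (k : ℕ) : f (2 * k) = 1 / 4 * f k := by
      simp only [hf, Nat.cast_mul, Nat.cast_ofNat]; ring
    simpa only [hterm] using hasSum_zeta_two.mul_left (1 / 4)
  have hodd : Summable fun k : ℕ => f (2 * k + 1) :=
    hasSum_zeta_two.summable.comp_injective (i := fun k : ℕ => 2 * k + 1)
      fun _ _ h => by simpa using h
  have htotal : 1 / 4 * (π ^ 2 / 6) + ∑' k : ℕ, f (2 * k + 1) = π ^ 2 / 6 :=
    (heven.even_add_odd hodd.hasSum).unique hasSum_zeta_two
  have hvalue : ∑' k : ℕ, f (2 * k + 1) = π ^ 2 / 8 := by linarith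
  have hsum := hodd.hasSum
  rw [hvalue] at hsum
  simpa [hf] using hsum

lemma lintegral_ofReal_exp_div_odd (k : ℕ) :
    ∫⁻ r in Ioi 0, ENNReal.ofReal (4 / π * (rexp (-((2 * k + 1) * r)) / (2 * k + 1))) =
      ENNReal.ofReal (4 / π * ((2 * k + 1 : ℝ) ^ 2)⁻¹) := by
  have hneg : (-(2 * k + 1) : ℝ) < 0 := by linarith [k.cast_nonneg (α := ℝ)]
  have hint := ((integrableOn_exp_mul_Ioi hneg 0).div_const (2 * k + 1)).const_mul (4 / π)
  simp only [neg_mul] at hint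
  rw [← ofReal_integral_eq_lintegral_ofReal hint (.of_forall fun r => by positivity),
    integral_const_mul, integral_div]
  simp only [← neg_mul, integral_exp_mul_Ioi hneg]
  congr 2
  field_simp
  simp

lemma lintegral_abs_sin_szNagyMeasure :
    ∫⁻ t, ENNReal.ofReal |sin t| ∂szNagyMeasure = ENNReal.ofReal (π / 2) := by
  have hinner (r : ℝ) (hr : r ∈ Ioi (0 : ℝ)) :
      ∫⁻ t, ENNReal.ofReal (cauchyDensity r t / sinh r) * ENNReal.ofReal |sin t| =
        ∑' k : ℕ, ENNReal.ofReal (4 / π * (rexp (-((2 * k + 1) * r)) / (2 * k + 1))) := by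
    have hint : Integrable fun t => (sinh r)⁻¹ * (|sin t| * cauchyDensity r t) := by
      refine ((integrable_cauchyDensity r).bdd_mul (c := 1) (by fun_prop) ?_).const_mul _
      exact .of_forall fun t => by simpa using abs_sin_le_one t
    calc ∫⁻ t, ENNReal.ofReal (cauchyDensity r t / sinh r) * ENNReal.ofReal |sin t|
      _ = ENNReal.ofReal (∫ t, (sinh r)⁻¹ * (|sin t| * cauchyDensity r t)) := by
        rw [ofReal_integral_eq_lintegral_ofReal hint (.of_forall fun t => ?_)]
        · refine lintegral_congr fun t => ?_
          rw [← ENNReal.ofReal_mul' (abs_nonneg _)]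
          ring_nf
        · have := cauchyDensity_nonneg hr t
          have := sinh_pos_iff.2 hr
          positivity
      _ = ENNReal.ofReal (∑' k : ℕ, 4 / π * (rexp (-((2 * k + 1) * r)) / (2 * k + 1))) := by
        rw [integral_const_mul, integral_abs_sin_mul_cauchyDensity hr, tsum_mul_left]
        rw [mul_comm (4 / π), mul_assoc, inv_mul_cancel_left₀ (sinh_pos_iff.2 hr).ne']
      _ = _ := ENNReal.ofReal_tsum_of_nonneg (fun k => by positivity)
        ((summable_exp_neg_odd_div hr).mul_left _)
  rw [lintegral_szNagyMeasure (by fun_prop), setLIntegral_congr_fun measurableSet_Ioi hinner,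
    lintegral_tsum fun k => by fun_prop]
  simp only [lintegral_ofReal_exp_div_odd]
  rw [← ENNReal.ofReal_tsum_of_nonneg (fun k => by positivity)
    (hasSum_inv_odd_sq.mul_left (4 / π)).summable, (hasSum_inv_odd_sq.mul_left (4 / π)).tsum_eq]
  congr 1
  field_simp
  norm_num

lemma integrable_sin_szNagyMeasure : Integrable sin szNagyMeasure := by
  refine ⟨by fun_prop, ?_⟩
  simp only [HasFiniteIntegral, Real.enorm_eq_ofReal_abs]
  rw [lintegral_abs_sin_szNagyMeasure]
  exact ENNReal.ofReal_lt_top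

lemma integral_abs_sin_szNagyMeasure : ∫ t, |sin t| ∂szNagyMeasure = π / 2 := by
  rw [integral_eq_lintegral_of_nonneg_ae (.of_forall fun t => abs_nonneg _) (by fun_prop),
    lintegral_abs_sin_szNagyMeasure, ENNReal.toReal_ofReal (by positivity)]

lemma integral_cauchyDensity_mul_sin_mul_cexp {r s : ℝ} (hr : 0 < r) (hs : 1 ≤ |s|) :
    ∫ t : ℝ, (cauchyDensity r t : ℂ) * (sin t * Complex.exp (s * t * Complex.I)) =
      sinh r * (Complex.I * (s / |s| : ℝ) * rexp (-|s| * r)) := by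
  have hint (a : ℝ) :
      Integrable fun t : ℝ => (cauchyDensity r t : ℂ) * Complex.exp (a * t * Complex.I) := by
    refine (integrable_cauchyDensity r).ofReal.mul_bdd (c := 1)
      (Continuous.aestronglyMeasurable (by fun_prop)) (.of_forall fun t => ?_)
    rw [← Complex.ofReal_mul, Complex.norm_exp_ofReal_mul_I]
  have hsplit (t : ℝ) : (cauchyDensity r t : ℂ) * (sin t * Complex.exp (s * t * Complex.I)) =
      Complex.I / 2 * (cauchyDensity r t * Complex.exp ((s - 1 : ℝ) * t * Complex.I) -
        cauchyDensity r t * Complex.exp ((s + 1 : ℝ) * t * Complex.I)) := by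
    rw [Complex.ofReal_sin, Complex.sin]
    have hexp (ε : ℂ) : Complex.exp ((s + ε) * t * Complex.I) =
        Complex.exp (ε * t * Complex.I) * Complex.exp (s * t * Complex.I) := by
      rw [← Complex.exp_add]; ring_nf
    push_cast
    rw [sub_eq_add_neg (s : ℂ), hexp, hexp, one_mul, neg_one_mul]
    ring
  have hval : rexp (-(r * |s - 1|)) - rexp (-(r * |s + 1|)) =
      2 * (sinh r * ((s / |s|) * rexp (-|s| * r))) := by
    rw [sinh_eq]
    rcases le_abs'.1 hs with h | h
    · rw [abs_of_neg (by linarith), abs_of_nonpos (by linarith), abs_of_neg (by linarith : s < 0),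
        div_neg_self (by linarith)]
      simp only [neg_neg, neg_mul, mul_neg, one_mul, sub_mul, div_mul_eq_mul_div, ← exp_add]
      ring_nf
    · rw [abs_of_nonneg (by linarith), abs_of_nonneg (by linarith),
        abs_of_pos (by linarith : 0 < s), div_self (by linarith)]
      simp only [one_mul, sub_mul, div_mul_eq_mul_div, ← exp_add]
      ring_nf
  simp only [hsplit, integral_const_mul]
  rw [integral_sub (hint _) (hint _), integral_cauchyDensity_mul_cexp hr,
    integral_cauchyDensity_mul_cexp hr]
  have hval' := congrArg Complex.ofReal hval
  push_cast at hval' ⊢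
  linear_combination Complex.I / 2 * hval'

lemma integral_sin_mul_cexp_szNagyMeasure {s : ℝ} (hs : 1 ≤ |s|) :
    ∫ t, sin t * Complex.exp (s * t * Complex.I) ∂szNagyMeasure = Complex.I / s := by
  have hint : Integrable (fun t => sin t * Complex.exp (s * t * Complex.I)) szNagyMeasure := by
    refine integrable_sin_szNagyMeasure.ofReal.mul_bdd (c := 1)
      (Continuous.aestronglyMeasurable (by fun_prop)) (.of_forall fun t => ?_)
    rw [← Complex.ofReal_mul, Complex.norm_exp_ofReal_mul_I]
  have hinner (r : ℝ) (hr : r ∈ Ioi (0 : ℝ)) :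
      (sinh r : ℂ)⁻¹ *
          ∫ t : ℝ, (cauchyDensity r t : ℂ) * (sin t * Complex.exp (s * t * Complex.I)) =
        Complex.I * (s / |s| : ℝ) * rexp (-|s| * r) := by
    have hsinh : (sinh r : ℂ) ≠ 0 := by exact_mod_cast (sinh_pos_iff.2 hr).ne'
    rw [integral_cauchyDensity_mul_sin_mul_cexp hr hs, inv_mul_cancel_left₀ hsinh]
  have hs0 : 0 < |s| := one_pos.trans_le hs
  rw [integral_szNagyMeasure hint, setIntegral_congr_fun measurableSet_Ioi hinner,
    integral_const_mul, integral_complex_ofReal, integral_exp_mul_Ioi (neg_lt_zero.2 hs0),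
    mul_zero, exp_zero, neg_div_neg_eq, mul_assoc, ← Complex.ofReal_mul, div_eq_mul_inv Complex.I,
    ← Complex.ofReal_inv, div_mul_div_comm, mul_one, abs_mul_abs_self, div_mul_cancel_left₀]
  exact abs_pos.1 hs0

lemma integral_sin_mul_cexp_div_mul_szNagyMeasure {δ y : ℝ} (hδ : 0 < δ) (hy : δ ≤ |y|) :
    ∫ t, sin t * Complex.exp ((y / δ : ℝ) * t * Complex.I) * y ∂szNagyMeasure =
      δ * Complex.I := by
  have hy0 : (y : ℂ) ≠ 0 := Complex.ofReal_ne_zero.2 (abs_pos.1 (hδ.trans_le hy))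
  have hs : 1 ≤ |y / δ| := by rwa [abs_div, abs_of_pos hδ, one_le_div hδ]
  rw [integral_mul_const, integral_sin_mul_cexp_szNagyMeasure hs]
  push_cast
  field_simp

end SzNagyMeasure

section FunctionalCalculus

variable {𝒜 : Type*} [CStarAlgebra 𝒜] {a : 𝒜}

/-- The continuous functional calculus of a self-adjoint element for complex-valued functions of
a real variable; it only depends on the values of `f` on the real spectrum. -/
noncomputable def cfcOfReal (f : ℝ → ℂ) (a : 𝒜) : 𝒜 :=
  cfc (fun z : ℂ => f z.re) a

lemma re_mem_spectrum (ha : IsSelfAdjoint a) {z : ℂ} (hz : z ∈ spectrum ℂ a) :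
    z.re ∈ spectrum ℝ a :=
  ha.spectrumRestricts.apply_mem hz

lemma continuousOn_comp_re (ha : IsSelfAdjoint a) {f : ℝ → ℂ}
    (hf : ContinuousOn f (spectrum ℝ a)) :
    ContinuousOn (fun z : ℂ => f z.re) (spectrum ℂ a) :=
  hf.comp Complex.continuous_re.continuousOn fun _ => re_mem_spectrum ha

lemma cfcOfReal_congr (ha : IsSelfAdjoint a) {f g : ℝ → ℂ} (h : (spectrum ℝ a).EqOn f g) :
    cfcOfReal f a = cfcOfReal g a :=
  cfc_congr fun _ hz => h (re_mem_spectrum ha hz)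

lemma cfcOfReal_ofReal (ha : IsSelfAdjoint a) (f : ℝ → ℝ) :
    cfcOfReal (fun x => (f x : ℂ)) a = cfc f a :=
  (cfc_real_eq_complex f ha).symm

lemma norm_cfcOfReal_le (ha : IsSelfAdjoint a) {f : ℝ → ℂ} {c : ℝ} (hc : 0 ≤ c)
    (h : ∀ x ∈ spectrum ℝ a, ‖f x‖ ≤ c) : ‖cfcOfReal f a‖ ≤ c :=
  norm_cfc_le hc fun _ hz => h _ (re_mem_spectrum ha hz)

lemma cfcOfReal_mul (ha : IsSelfAdjoint a) {f g : ℝ → ℂ} (hf : ContinuousOn f (spectrum ℝ a))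
    (hg : ContinuousOn g (spectrum ℝ a)) :
    cfcOfReal (fun x => f x * g x) a = cfcOfReal f a * cfcOfReal g a :=
  cfc_mul _ _ a (continuousOn_comp_re ha hf) (continuousOn_comp_re ha hg)

lemma cfcOfReal_const_mul (ha : IsSelfAdjoint a) (c : ℂ) {f : ℝ → ℂ}
    (hf : ContinuousOn f (spectrum ℝ a)) :
    cfcOfReal (fun x => c * f x) a = c • cfcOfReal f a :=
  cfc_const_mul c _ a (continuousOn_comp_re ha hf)

lemma cfcOfReal_sum (ha : IsSelfAdjoint a) {ι : Type*} (s : Finset ι) {f : ι → ℝ → ℂ}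
    (hf : ∀ j ∈ s, ContinuousOn (f j) (spectrum ℝ a)) :
    cfcOfReal (fun x => ∑ j ∈ s, f j x) a = ∑ j ∈ s, cfcOfReal (f j) a := by
  unfold cfcOfReal
  rw [← cfc_sum _ a s fun j hj => continuousOn_comp_re ha (hf j hj)]
  congr 1
  ext z
  simp

lemma cfc_sub_algebraMap (ha : IsSelfAdjoint a) (w : ℝ) :
    cfc (fun x : ℝ => x - w) a = a - algebraMap ℝ 𝒜 w := by
  rw [cfc_sub _ _ a, cfc_id' ℝ a, cfc_const w a]

lemma cfcOfReal_sub_algebraMap (ha : IsSelfAdjoint a) (w : ℝ) :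
    cfcOfReal (fun x => (x - w : ℂ)) a = a - algebraMap ℝ 𝒜 w := by
  simp only [← Complex.ofReal_sub, cfcOfReal_ofReal ha, cfc_sub_algebraMap ha]

lemma cfcOfReal_integral (ha : IsSelfAdjoint a) {μ : Measure ℝ} {f : ℝ → ℝ → ℂ} {bound : ℝ → ℝ}
    (hf : ContinuousOn (Function.uncurry f) (univ ×ˢ spectrum ℝ a))
    (hbound : ∀ t, ∀ x ∈ spectrum ℝ a, ‖f t x‖ ≤ bound t) (hint : Integrable bound μ) :
    Integrable (fun t => cfcOfReal (f t) a) μ ∧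
      ∫ t, cfcOfReal (f t) a ∂μ = cfcOfReal (fun x => ∫ t, f t x ∂μ) a := by
  have hcont : ContinuousOn (Function.uncurry fun (t : ℝ) (z : ℂ) => f t z.re)
      (univ ×ˢ spectrum ℂ a) :=
    hf.comp (f := fun p : ℝ × ℂ => (p.1, p.2.re)) (by fun_prop)
      fun p hp => ⟨mem_univ _, re_mem_spectrum ha hp.2⟩
  have hae : ∀ᵐ t ∂μ, ∀ z ∈ spectrum ℂ a, ‖f t z.re‖ ≤ bound t :=
    .of_forall fun t z hz => hbound t _ (re_mem_spectrum ha hz)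
  exact ⟨integrable_cfc _ bound a hcont hae hint.2, (cfc_integral _ bound a hcont hae hint.2).symm⟩

end FunctionalCalculus

section Sylvester

variable {𝒜 : Type*} [CStarAlgebra 𝒜] {a b : 𝒜} {S T : Set ℝ} {δ ε : ℝ}

/-- The element `e^{iτa} E_a(S)`, where `E_a(S)` is the spectral projection of `a` associated with
the part `S` of its spectrum. -/
noncomputable def truncatedExp (S : Set ℝ) (a : 𝒜) (τ : ℝ) : 𝒜 :=
  cfcOfReal (fun x => Complex.exp (τ * x * Complex.I) * (S.indicator (fun _ => (1 : ℝ)) x : ℝ)) a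

lemma norm_indicator_one_le (S : Set ℝ) (x : ℝ) :
    ‖((S.indicator (fun _ => (1 : ℝ)) x : ℝ) : ℂ)‖ ≤ 1 := by
  rw [Complex.norm_real]
  exact (norm_indicator_le_norm_self _ _).trans_eq norm_one

lemma norm_truncatedExp_le (ha : IsSelfAdjoint a) (τ : ℝ) : ‖truncatedExp S a τ‖ ≤ 1 := by
  refine norm_cfcOfReal_le ha zero_le_one fun x _ => ?_
  rw [norm_mul, ← Complex.ofReal_mul, Complex.norm_exp_ofReal_mul_I, one_mul]
  exact norm_indicator_one_le S x

lemma cfcOfReal_sin_mul_cexp_mul_sub (ha : IsSelfAdjoint a)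
    (hS : ContinuousOn (S.indicator fun _ => (1 : ℝ)) (spectrum ℝ a)) (δ w t : ℝ) :
    cfcOfReal (fun x => sin t * Complex.exp (((x - w) / δ : ℝ) * t * Complex.I) *
        (x - w : ℝ) * (S.indicator (fun _ => (1 : ℝ)) x : ℝ)) a =
      (sin t * Complex.exp ((-(t / δ * w) : ℝ) * Complex.I)) •
        (truncatedExp S a (t / δ) * (a - algebraMap ℝ 𝒜 w)) := by
  have hχc : ContinuousOn (fun x => ((S.indicator (fun _ => (1 : ℝ)) x : ℝ) : ℂ)) (spectrum ℝ a) :=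
    Complex.continuous_ofReal.comp_continuousOn hS
  have hexpc : ContinuousOn (fun x : ℝ => Complex.exp ((t / δ : ℝ) * x * Complex.I) *
      (S.indicator (fun _ => (1 : ℝ)) x : ℝ)) (spectrum ℝ a) :=
    ContinuousOn.mul (by fun_prop) hχc
  have hsubc : ContinuousOn (fun x : ℝ => (x - w : ℂ)) (spectrum ℝ a) := by fun_prop
  rw [truncatedExp, ← cfcOfReal_sub_algebraMap ha, ← cfcOfReal_mul ha hexpc hsubc,
    ← cfcOfReal_const_mul ha _ (hexpc.fun_mul hsubc)]
  refine cfcOfReal_congr ha fun x _ => ?_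
  have hexp : Complex.exp (((x - w) / δ : ℝ) * t * Complex.I) =
      Complex.exp ((-(t / δ * w) : ℝ) * Complex.I) *
        Complex.exp ((t / δ : ℝ) * x * Complex.I) := by
    rw [← Complex.exp_add]
    congr 1
    push_cast
    ring
  simp only [hexp, Complex.ofReal_sub]
  ring

lemma integral_truncatedExp (ha : IsSelfAdjoint a)
    (hS : ContinuousOn (S.indicator fun _ => (1 : ℝ)) (spectrum ℝ a)) (hδ : 0 < δ) {w : ℝ}
    (hw : ∀ x ∈ spectrum ℝ a, x ∈ S → δ ≤ |x - w|) :
    Integrable (fun t : ℝ => (sin t * Complex.exp ((-(t / δ * w) : ℝ) * Complex.I)) •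
        (truncatedExp S a (t / δ) * (a - algebraMap ℝ 𝒜 w))) szNagyMeasure ∧
      ∫ t : ℝ, (sin t * Complex.exp ((-(t / δ * w) : ℝ) * Complex.I)) •
        (truncatedExp S a (t / δ) * (a - algebraMap ℝ 𝒜 w)) ∂szNagyMeasure =
      (δ * Complex.I) • cfc (S.indicator fun _ => (1 : ℝ)) a := by
  set χ : ℝ → ℂ := fun x => (S.indicator (fun _ => (1 : ℝ)) x : ℝ) with hχ
  have hχc : ContinuousOn χ (spectrum ℝ a) := Complex.continuous_ofReal.comp_continuousOn hS
  set f : ℝ → ℝ → ℂ := fun t x =>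
    sin t * Complex.exp (((x - w) / δ : ℝ) * t * Complex.I) * (x - w : ℝ) * χ x with hf
  have hpoint (x : ℝ) (hx : x ∈ spectrum ℝ a) :
      ∫ t, f t x ∂szNagyMeasure = δ * Complex.I * χ x := by
    by_cases hxS : x ∈ S
    · simp only [hf]
      rw [integral_mul_const, integral_sin_mul_cexp_div_mul_szNagyMeasure hδ (hw x hx hxS)]
    · simp [hf, hχ, hxS]
  have hcont : ContinuousOn (Function.uncurry f) (univ ×ˢ spectrum ℝ a) :=
    ContinuousOn.mul (by fun_prop) (hχc.comp continuousOn_snd fun _ hp => hp.2)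
  have hbound (t x) (hx : x ∈ spectrum ℝ a) : ‖f t x‖ ≤ |sin t| * ‖a - algebraMap ℝ 𝒜 w‖ := by
    have hxw : ‖x - w‖ ≤ ‖a - algebraMap ℝ 𝒜 w‖ := by
      simpa only [cfc_sub_algebraMap ha] using norm_apply_le_norm_cfc (fun y : ℝ => y - w) a hx
    calc ‖f t x‖ = |sin t| * (‖x - w‖ * ‖χ x‖) := by
          simp only [hf, norm_mul, ← Complex.ofReal_mul, Complex.norm_exp_ofReal_mul_I,
            Complex.norm_real, norm_eq_abs, one_mul, mul_assoc]
      _ ≤ |sin t| * ‖a - algebraMap ℝ 𝒜 w‖ := by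
          gcongr
          exact (mul_le_of_le_one_right (norm_nonneg _) (norm_indicator_one_le S x)).trans hxw
  have key := cfcOfReal_integral ha hcont hbound (integrable_sin_szNagyMeasure.abs.mul_const _)
  simp only [hf, hχ, cfcOfReal_sin_mul_cexp_mul_sub ha hS] at key
  rw [cfcOfReal_congr ha hpoint, cfcOfReal_const_mul ha _ hχc, cfcOfReal_ofReal ha] at key
  exact key

lemma exists_partitionOfUnity_isSubordinate_ball {X : Type*} [MetricSpace X] {K : Set X}
    (hK : IsCompact K) (hε : 0 < ε) :
    ∃ s : Finset X, (s : Set X) ⊆ K ∧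
      ∃ ρ : PartitionOfUnity s X K, ρ.IsSubordinate fun w => Metric.ball (w : X) ε := by
  obtain ⟨s, hsK, hs, hcover⟩ := hK.finite_cover_balls hε
  lift s to Finset X using hs
  refine ⟨s, hsK, PartitionOfUnity.exists_isSubordinate hK.isClosed _
    (fun _ => Metric.isOpen_ball) ?_⟩
  rw [iUnion_subtype]
  exact hcover

lemma isCompact_spectrum_inter
    (hT : ContinuousOn (T.indicator fun _ => (1 : ℝ)) (spectrum ℝ b)) :
    IsCompact (spectrum ℝ b ∩ T) := by
  have hK := hT.preimage_isClosed_of_isClosed (spectrum.isClosed b) (isClosed_singleton (x := 1))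
  have hTeq : T.indicator (fun _ => (1 : ℝ)) ⁻¹' {1} = T := by
    ext x
    by_cases hx : x ∈ T <;> simp [hx]
  rw [hTeq] at hK
  exact (spectrum.isCompact b).of_isClosed_subset hK inter_subset_left

lemma norm_sum_cfcOfReal_partition_le {ι : Type*} [Fintype ι] (hb : IsSelfAdjoint b)
    (hT : ContinuousOn (T.indicator fun _ => (1 : ℝ)) (spectrum ℝ b)) {K : Set ℝ}
    (ρ : PartitionOfUnity ι ℝ K) {g : ι → ℝ → ℂ} (hgc : ∀ i, Continuous (g i)) {κ : ℝ}
    (hκ : 0 ≤ κ) (hg : ∀ i x, ρ i x ≠ 0 → ‖g i x‖ ≤ κ) :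
    ‖∑ i, cfcOfReal (fun x => g i x * (ρ i x * (T.indicator (fun _ => (1 : ℝ)) x : ℝ))) b‖ ≤ κ := by
  have hχc : ContinuousOn (fun x => ((T.indicator (fun _ => (1 : ℝ)) x : ℝ) : ℂ)) (spectrum ℝ b) :=
    Complex.continuous_ofReal.comp_continuousOn hT
  rw [← cfcOfReal_sum hb _ fun i _ =>
    (hgc i).continuousOn.fun_mul (ContinuousOn.fun_mul (by fun_prop) hχc)]
  refine norm_cfcOfReal_le hb hκ fun x _ => ?_
  have hterm (i : ι) :
      ‖g i x * (ρ i x * (T.indicator (fun _ => (1 : ℝ)) x : ℝ))‖ ≤ κ * ρ i x := by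
    rw [norm_mul, norm_mul, Complex.norm_real, norm_of_nonneg (ρ.nonneg i x)]
    rcases eq_or_ne (ρ i x) 0 with h0 | h0
    · simp [h0]
    · have hle := mul_le_of_le_one_right (ρ.nonneg i x) (norm_indicator_one_le T x)
      exact mul_le_mul (hg i x h0) hle (mul_nonneg (ρ.nonneg i x) (norm_nonneg _)) hκ
  calc _ ≤ ∑ i, κ * ρ i x := norm_sum_le_of_le _ fun i _ => hterm i
    _ ≤ κ := by
      rw [← Finset.mul_sum, ← finsum_eq_sum_of_fintype]
      exact mul_le_of_le_one_right hκ (ρ.sum_le_one x)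

lemma exists_approx_spectral_resolution (hb : IsSelfAdjoint b)
    (hT : ContinuousOn (T.indicator fun _ => (1 : ℝ)) (spectrum ℝ b)) (hε : 0 < ε) :
    ∃ (s : Finset ℝ) (R : s → 𝒜), (s : Set ℝ) ⊆ spectrum ℝ b ∩ T ∧
      ∑ w, R w = cfc (T.indicator fun _ => (1 : ℝ)) b ∧
      ∀ c : s → ℂ, (∀ w, ‖c w‖ ≤ 1) → ‖∑ w, c w • R w‖ ≤ 1 ∧
        ‖∑ w, c w • ((b - algebraMap ℝ 𝒜 w) * R w)‖ ≤ ε := by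
  obtain ⟨s, hs, ρ, hρ⟩ :=
    exists_partitionOfUnity_isSubordinate_ball (isCompact_spectrum_inter hT) hε
  set χ : ℝ → ℂ := fun x => (T.indicator (fun _ => (1 : ℝ)) x : ℝ) with hχ
  have hχc : ContinuousOn χ (spectrum ℝ b) := Complex.continuous_ofReal.comp_continuousOn hT
  have hφc (w : s) : ContinuousOn (fun x => (ρ w x : ℂ) * χ x) (spectrum ℝ b) :=
    ContinuousOn.mul (by fun_prop) hχc
  refine ⟨s, fun w => cfcOfReal (fun x => ρ w x * χ x) b, hs, ?_, fun c hc => ⟨?_, ?_⟩⟩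
  · rw [← cfcOfReal_sum hb _ fun w _ => hφc w, ← cfcOfReal_ofReal hb]
    refine cfcOfReal_congr hb fun x hx => ?_
    by_cases hxT : x ∈ T
    · have hsum : ∑ w, ρ w x = 1 := by
        rw [← finsum_eq_sum_of_fintype]
        exact ρ.sum_eq_one ⟨hx, hxT⟩
      rw [← Finset.sum_mul, ← Complex.ofReal_sum, hsum, Complex.ofReal_one, one_mul]
    · simp [hχ, hxT]
  · simp only [← cfcOfReal_const_mul hb _ (hφc _)]
    exact norm_sum_cfcOfReal_partition_le hb hT ρ (fun w => continuous_const) zero_le_one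
      fun w _ _ => hc w
  · have hw (w : s) : c w • ((b - algebraMap ℝ 𝒜 w) * cfcOfReal (fun x => ρ w x * χ x) b) =
        cfcOfReal (fun x => (c w * (x - w)) * (ρ w x * χ x)) b := by
      simp only [mul_assoc (c w)]
      have hsub : ContinuousOn (fun x : ℝ => (x - w : ℂ)) (spectrum ℝ b) := by fun_prop
      rw [cfcOfReal_const_mul hb _ (hsub.fun_mul (hφc w)), cfcOfReal_mul hb hsub (hφc w),
        cfcOfReal_sub_algebraMap hb]
    simp only [hw]
    refine norm_sum_cfcOfReal_partition_le hb hT ρ (fun w => by fun_prop) hε.le fun w x hx => ?_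
    have hxw : |x - w| < ε := hρ w (subset_tsupport _ hx)
    rw [norm_mul, ← Complex.ofReal_sub, Complex.norm_real]
    exact (mul_le_of_le_one_left (norm_nonneg _) (hc w)).trans hxw.le

lemma smul_mul_mul_eq_integral (ha : IsSelfAdjoint a)
    (hS : ContinuousOn (S.indicator fun _ => (1 : ℝ)) (spectrum ℝ a)) (hδ : 0 < δ) {s : Finset ℝ}
    (hs : ∀ x ∈ spectrum ℝ a, x ∈ S → ∀ w ∈ s, δ ≤ |x - w|) (x : 𝒜) (R : s → 𝒜) :
    (δ * Complex.I) • (cfc (S.indicator fun _ => (1 : ℝ)) a * x * ∑ w, R w) =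
      ∫ t : ℝ, (sin t : ℂ) • (truncatedExp S a (t / δ) *
        ∑ w : s, Complex.exp ((-(t / δ * w) : ℝ) * Complex.I) • ((a - algebraMap ℝ 𝒜 w) * x * R w))
          ∂szNagyMeasure := by
  have hw (w : s) := integral_truncatedExp ha hS hδ fun y hy hyS => hs y hy hyS w w.2
  calc (δ * Complex.I) • (cfc (S.indicator fun _ => (1 : ℝ)) a * x * ∑ w, R w)
    _ = ∑ w : s, (∫ t : ℝ, (sin t * Complex.exp ((-(t / δ * w) : ℝ) * Complex.I)) •
          (truncatedExp S a (t / δ) * (a - algebraMap ℝ 𝒜 w)) ∂szNagyMeasure) * (x * R w) := by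
      simp only [(hw _).2, smul_mul_assoc, ← mul_assoc, Finset.smul_sum, Finset.mul_sum]
    _ = ∑ w : s, ∫ t : ℝ, (sin t * Complex.exp ((-(t / δ * w) : ℝ) * Complex.I)) •
          (truncatedExp S a (t / δ) * (a - algebraMap ℝ 𝒜 w)) * (x * R w) ∂szNagyMeasure := by
      simp only [integral_mul_const_of_integrable (hw _).1]
    _ = _ := by
      rw [← integral_finsetSum _ fun w _ => (hw w).1.mul_const (x * R w)]
      simp only [Finset.mul_sum, Finset.smul_sum, smul_mul_assoc, mul_smul_comm, smul_smul,
        mul_assoc]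

lemma norm_cfc_indicator_mul_mul_le_add (ha : IsSelfAdjoint a) (hb : IsSelfAdjoint b)
    (hS : ContinuousOn (S.indicator fun _ => (1 : ℝ)) (spectrum ℝ a))
    (hT : ContinuousOn (T.indicator fun _ => (1 : ℝ)) (spectrum ℝ b)) (hδ : 0 < δ)
    (hST : ∀ x ∈ spectrum ℝ a, x ∈ S → ∀ y ∈ spectrum ℝ b, y ∈ T → δ ≤ |x - y|) (x : 𝒜)
    (hε : 0 < ε) :
    δ * ‖cfc (S.indicator fun _ => (1 : ℝ)) a * x * cfc (T.indicator fun _ => (1 : ℝ)) b‖ ≤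
      π / 2 * (‖a * x - x * b‖ + ‖x‖ * ε) := by
  obtain ⟨s, R, hs, hR, hbound⟩ := exists_approx_spectral_resolution hb hT hε
  have hsep : ∀ y ∈ spectrum ℝ a, y ∈ S → ∀ w ∈ s, δ ≤ |y - w| :=
    fun y hy hyS w hw => hST y hy hyS w (hs hw).1 (hs hw).2
  have hsum (c : s → ℂ) (hc : ∀ w, ‖c w‖ ≤ 1) :
      ‖∑ w, c w • ((a - algebraMap ℝ 𝒜 w) * x * R w)‖ ≤ ‖a * x - x * b‖ + ‖x‖ * ε := by
    have hsplit : ∑ w, c w • ((a - algebraMap ℝ 𝒜 w) * x * R w) =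
        (a * x - x * b) * ∑ w, c w • R w + x * ∑ w, c w • ((b - algebraMap ℝ 𝒜 w) * R w) := by
      simp only [Finset.mul_sum, ← Finset.sum_add_distrib, mul_smul_comm, ← smul_add]
      refine Finset.sum_congr rfl fun w _ => ?_
      congr 1
      rw [sub_mul, Algebra.commutes]
      noncomm_ring
    rw [hsplit]
    refine (norm_add_le _ _).trans (add_le_add ?_ ?_)
    · exact (norm_mul_le _ _).trans (mul_le_of_le_one_right (norm_nonneg _) (hbound c hc).1)
    · exact (norm_mul_le _ _).trans (by gcongr; exact (hbound c hc).2)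
  calc δ * ‖cfc (S.indicator fun _ => (1 : ℝ)) a * x * cfc (T.indicator fun _ => (1 : ℝ)) b‖
    _ = ‖(δ * Complex.I) • (cfc (S.indicator fun _ => (1 : ℝ)) a * x * ∑ w, R w)‖ := by
      rw [hR, norm_smul, norm_mul (δ : ℂ), Complex.norm_I, mul_one, Complex.norm_real,
        norm_of_nonneg hδ.le]
    _ ≤ ∫ t, |sin t| * (‖a * x - x * b‖ + ‖x‖ * ε) ∂szNagyMeasure := by
      rw [smul_mul_mul_eq_integral ha hS hδ hsep]
      refine norm_integral_le_of_norm_le (integrable_sin_szNagyMeasure.abs.mul_const _)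
        (.of_forall fun t => ?_)
      rw [norm_smul, Complex.norm_real, norm_eq_abs]
      gcongr
      refine (norm_mul_le _ _).trans ?_
      refine (mul_le_of_le_one_left (norm_nonneg _) (norm_truncatedExp_le ha _)).trans ?_
      exact hsum _ fun w => (Complex.norm_exp_ofReal_mul_I _).le
    _ = π / 2 * (‖a * x - x * b‖ + ‖x‖ * ε) := by
      rw [integral_mul_const, integral_abs_sin_szNagyMeasure]

theorem norm_cfc_indicator_mul_mul_le (ha : IsSelfAdjoint a) (hb : IsSelfAdjoint b)
    (hS : ContinuousOn (S.indicator fun _ => (1 : ℝ)) (spectrum ℝ a))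
    (hT : ContinuousOn (T.indicator fun _ => (1 : ℝ)) (spectrum ℝ b)) (hδ : 0 < δ)
    (hST : ∀ x ∈ spectrum ℝ a, x ∈ S → ∀ y ∈ spectrum ℝ b, y ∈ T → δ ≤ |x - y|) (x : 𝒜) :
    δ * ‖cfc (S.indicator fun _ => (1 : ℝ)) a * x * cfc (T.indicator fun _ => (1 : ℝ)) b‖ ≤
      π / 2 * ‖a * x - x * b‖ := by
  have hlim : Tendsto (fun ε : ℝ => π / 2 * (‖a * x - x * b‖ + ‖x‖ * ε)) (𝓝[>] 0)
      (𝓝 (π / 2 * (‖a * x - x * b‖ + ‖x‖ * 0))) :=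
    tendsto_nhdsWithin_of_tendsto_nhds (Continuous.tendsto (by fun_prop) 0)
  rw [mul_zero, add_zero] at hlim
  refine ge_of_tendsto hlim ?_
  filter_upwards [self_mem_nhdsWithin] with ε hε
  exact norm_cfc_indicator_mul_mul_le_add ha hb hS hT hδ hST x hε

end Sylvester

section MaximalAngle

variable {𝕜 E : Type*} [RCLike 𝕜] [NormedAddCommGroup E] [InnerProductSpace 𝕜 E]

variable (𝕜) in
/-- The angle between two vectors of `E`, seen as a real inner product space. -/
noncomputable def realAngle (x y : E) : ℝ :=
  letI := InnerProductSpace.rclikeToReal 𝕜 E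
  InnerProductGeometry.angle x y

lemma realAngle_comm (x y : E) : realAngle 𝕜 x y = realAngle 𝕜 y x :=
  letI := InnerProductSpace.rclikeToReal 𝕜 E
  InnerProductGeometry.angle_comm x y

lemma realAngle_triangle (x y z : E) :
    realAngle 𝕜 x z ≤ realAngle 𝕜 x y + realAngle 𝕜 y z :=
  letI := InnerProductSpace.rclikeToReal 𝕜 E
  InnerProductGeometry.angle_le_angle_add_angle x y z

lemma realAngle_zero_right (x : E) : realAngle 𝕜 x 0 = π / 2 :=
  letI := InnerProductSpace.rclikeToReal 𝕜 E
  InnerProductGeometry.angle_zero_right x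

lemma realAngle_nonneg (x y : E) : 0 ≤ realAngle 𝕜 x y :=
  letI := InnerProductSpace.rclikeToReal 𝕜 E
  InnerProductGeometry.angle_nonneg x y

lemma realAngle_le_pi (x y : E) : realAngle 𝕜 x y ≤ π :=
  letI := InnerProductSpace.rclikeToReal 𝕜 E
  InnerProductGeometry.angle_le_pi x y

lemma cos_realAngle_mul_norm_mul_norm (x y : E) :
    cos (realAngle 𝕜 x y) * (‖x‖ * ‖y‖) = RCLike.re (inner 𝕜 x y) :=
  letI := InnerProductSpace.rclikeToReal 𝕜 E
  InnerProductGeometry.cos_angle_mul_norm_mul_norm x y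

lemma norm_add_sq_of_inner_eq_zero {x y : E} (h : inner 𝕜 x y = 0) :
    ‖x + y‖ ^ 2 = ‖x‖ ^ 2 + ‖y‖ ^ 2 := by
  simpa only [sq] using norm_add_sq_eq_norm_sq_add_norm_sq_of_inner_eq_zero x y h

/-- The maximal angle `arcsin ‖P - Q‖` between the ranges of two orthogonal projections. -/
noncomputable def maxAngle (P Q : E →L[𝕜] E) : ℝ :=
  arcsin ‖P - Q‖

lemma maxAngle_comm (P Q : E →L[𝕜] E) : maxAngle P Q = maxAngle Q P := by
  rw [maxAngle, maxAngle, norm_sub_rev]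

lemma maxAngle_nonneg (P Q : E →L[𝕜] E) : 0 ≤ maxAngle P Q :=
  arcsin_nonneg.2 (norm_nonneg _)

variable [CompleteSpace E] {P Q R : E →L[𝕜] E} {x : E} {θ c : ℝ}

lemma apply_apply_of_isStarProjection (hP : IsStarProjection P) (x : E) : P (P x) = P x :=
  DFunLike.congr_fun hP.isIdempotentElem x

lemma inner_apply_sub_apply_eq_zero (hP : IsStarProjection P) (x y : E) :
    inner 𝕜 (P x) (y - P y) = 0 := by
  have hsymm : inner 𝕜 (P x) (y - P y) = inner 𝕜 x (P (y - P y)) :=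
    hP.isSelfAdjoint.isSymmetric x (y - P y)
  rw [hsymm, map_sub, apply_apply_of_isStarProjection hP, sub_self, inner_zero_right]

lemma real_inner_apply_sub_apply_eq_zero (hP : IsStarProjection P) (x : E) :
    letI := InnerProductSpace.rclikeToReal 𝕜 E
    inner ℝ (P x) (x - P x) = 0 := by
  let := InnerProductSpace.rclikeToReal 𝕜 E
  rw [real_inner_eq_re_inner 𝕜, inner_apply_sub_apply_eq_zero hP, map_zero]

lemma norm_sq_eq_norm_apply_sq_add (hP : IsStarProjection P) (x : E) :
    ‖x‖ ^ 2 = ‖P x‖ ^ 2 + ‖x - P x‖ ^ 2 := by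
  rw [← norm_add_sq_of_inner_eq_zero (inner_apply_sub_apply_eq_zero hP x x), add_sub_cancel]

lemma cos_realAngle_apply_mul_norm (hP : IsStarProjection P) (x : E) :
    cos (realAngle 𝕜 x (P x)) * ‖x‖ = ‖P x‖ := by
  let := InnerProductSpace.rclikeToReal 𝕜 E
  have h := InnerProductGeometry.cos_angle_add_mul_norm_of_inner_eq_zero
    (real_inner_apply_sub_apply_eq_zero hP x)
  rwa [add_sub_cancel, InnerProductGeometry.angle_comm] at h

lemma sin_realAngle_apply_mul_norm (hP : IsStarProjection P) (x : E) :
    sin (realAngle 𝕜 x (P x)) * ‖x‖ = ‖x - P x‖ := by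
  let := InnerProductSpace.rclikeToReal 𝕜 E
  have h := InnerProductGeometry.sin_angle_add_mul_norm_of_inner_eq_zero
    (real_inner_apply_sub_apply_eq_zero hP x)
  rwa [add_sub_cancel, InnerProductGeometry.angle_comm] at h

lemma realAngle_apply_le_pi_div_two (hP : IsStarProjection P) (x : E) :
    realAngle 𝕜 x (P x) ≤ π / 2 := by
  let := InnerProductSpace.rclikeToReal 𝕜 E
  have h := InnerProductGeometry.angle_add_le_pi_div_two_of_inner_eq_zero
    (real_inner_apply_sub_apply_eq_zero hP x)
  rwa [add_sub_cancel, InnerProductGeometry.angle_comm] at h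

lemma realAngle_apply_le (hP : IsStarProjection P) (x y : E) :
    realAngle 𝕜 x (P x) ≤ realAngle 𝕜 x (P y) := by
  rcases eq_or_ne x 0 with rfl | hx
  · rw [realAngle_comm, realAngle_zero_right, realAngle_comm, realAngle_zero_right]
  rcases eq_or_ne (P y) 0 with hy | hy
  · rw [hy, realAngle_zero_right]
    exact realAngle_apply_le_pi_div_two hP x
  have hinner : inner 𝕜 x (P y) = inner 𝕜 (P x) (P y) := by
    conv_lhs => rw [← apply_apply_of_isStarProjection hP y]
    exact (hP.isSelfAdjoint.isSymmetric x (P y)).symm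
  have hmul : cos (realAngle 𝕜 x (P y)) * (‖x‖ * ‖P y‖) ≤
      cos (realAngle 𝕜 x (P x)) * (‖x‖ * ‖P y‖) := by
    rw [cos_realAngle_mul_norm_mul_norm, hinner, ← mul_assoc, cos_realAngle_apply_mul_norm hP]
    exact re_inner_le_norm _ _
  have hcos := le_of_mul_le_mul_right hmul (by positivity)
  exact (strictAntiOn_cos.le_iff_ge ⟨realAngle_nonneg _ _, realAngle_le_pi _ _⟩
    ⟨realAngle_nonneg _ _, realAngle_le_pi _ _⟩).1 hcos

lemma realAngle_apply_le_maxAngle (hP : IsStarProjection P) (hx : Q x = x) (hx0 : x ≠ 0) :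
    realAngle 𝕜 x (P x) ≤ maxAngle P Q := by
  have hle : realAngle 𝕜 x (P x) ≤ π / 2 := realAngle_apply_le_pi_div_two hP x
  have hpos : -(π / 2) < realAngle 𝕜 x (P x) := by
    linarith [pi_pos, realAngle_nonneg (𝕜 := 𝕜) x (P x)]
  rw [maxAngle, le_arcsin_iff_sin_le' ⟨hpos, hle⟩]
  refine le_of_mul_le_mul_right ?_ (norm_pos_iff.2 hx0)
  rw [sin_realAngle_apply_mul_norm hP, norm_sub_rev]
  simpa [hx] using (P - Q).le_opNorm x

lemma realAngle_apply_le_maxAngle_add_maxAngle (hP : IsStarProjection P)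
    (hQ : IsStarProjection Q) (hx : R x = x) (hx0 : x ≠ 0) :
    realAngle 𝕜 x (P x) ≤ maxAngle P Q + maxAngle Q R := by
  have hQR : realAngle 𝕜 x (Q x) ≤ maxAngle Q R := realAngle_apply_le_maxAngle hQ hx hx0
  rcases eq_or_ne (Q x) 0 with h0 | h0
  · rw [h0, realAngle_zero_right] at hQR
    linarith [realAngle_apply_le_pi_div_two hP x, maxAngle_nonneg P Q]
  · have hPQ : realAngle 𝕜 (Q x) (P (Q x)) ≤ maxAngle P Q :=
      realAngle_apply_le_maxAngle hP (apply_apply_of_isStarProjection hQ x) h0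
    linarith [realAngle_apply_le hP x (Q x), realAngle_triangle (𝕜 := 𝕜) x (Q x) (P (Q x))]

lemma norm_one_sub_mul_le_sin (hP : IsStarProjection P) (hR : IsStarProjection R) (hθ : 0 ≤ θ)
    (hθ' : θ ≤ π / 2) (h : ∀ x, R x = x → x ≠ 0 → realAngle 𝕜 x (P x) ≤ θ) :
    ‖(1 - P) * R‖ ≤ sin θ := by
  have hsin : 0 ≤ sin θ := sin_nonneg_of_nonneg_of_le_pi hθ (by linarith [pi_pos])
  refine ContinuousLinearMap.opNorm_le_bound _ hsin fun x => ?_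
  calc ‖((1 - P) * R) x‖ = sin (realAngle 𝕜 (R x) (P (R x))) * ‖R x‖ := by
        rw [sin_realAngle_apply_mul_norm hP]
        rfl
    _ ≤ sin θ * ‖R x‖ := by
        rcases eq_or_ne (R x) 0 with h0 | h0
        · simp [h0]
        · gcongr
          exact sin_le_sin_of_le_of_le_pi_div_two
            (by linarith [pi_pos, realAngle_nonneg (𝕜 := 𝕜) (R x) (P (R x))]) hθ'
            (h _ (apply_apply_of_isStarProjection hR x) h0)
    _ ≤ sin θ * ‖x‖ := by
        gcongr
        simpa using R.le_of_opNorm_le hR.norm_le x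

lemma norm_sub_le_of_isStarProjection (hP : IsStarProjection P) (hR : IsStarProjection R)
    (h₁ : ‖(1 - P) * R‖ ≤ c) (h₂ : ‖(1 - R) * P‖ ≤ c) : ‖P - R‖ ≤ c := by
  have hc : 0 ≤ c := (norm_nonneg _).trans h₁
  refine ContinuousLinearMap.opNorm_le_bound _ hc fun x => ?_
  have hstar : ‖P * (1 - R)‖ ≤ c := by
    rwa [← norm_star, star_mul, hP.isSelfAdjoint.star_eq, hR.one_sub.isSelfAdjoint.star_eq]
  have hR_apply : ‖R x - P (R x)‖ ≤ c * ‖R x‖ := by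
    simpa [apply_apply_of_isStarProjection hR] using
      ContinuousLinearMap.le_of_opNorm_le _ h₁ (R x)
  have hone_sub_apply : ‖P (x - R x)‖ ≤ c * ‖x - R x‖ := by
    simpa [apply_apply_of_isStarProjection hR] using
      ContinuousLinearMap.le_of_opNorm_le _ hstar (x - R x)
  refine (sq_le_sq₀ (norm_nonneg _) (by positivity)).1 ?_
  calc ‖(P - R) x‖ ^ 2 = ‖P (x - R x) + -(R x - P (R x))‖ ^ 2 := by simp
    _ = ‖P (x - R x)‖ ^ 2 + ‖R x - P (R x)‖ ^ 2 := by
        rw [norm_add_sq_of_inner_eq_zero (𝕜 := 𝕜), norm_neg]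
        rw [inner_neg_right, inner_apply_sub_apply_eq_zero hP, neg_zero]
    _ ≤ (c * ‖x - R x‖) ^ 2 + (c * ‖R x‖) ^ 2 := by gcongr
    _ = (c * ‖x‖) ^ 2 := by
        rw [mul_pow c ‖x‖, norm_sq_eq_norm_apply_sq_add hR x]
        ring

theorem maxAngle_triangle (hP : IsStarProjection P) (hQ : IsStarProjection Q)
    (hR : IsStarProjection R) : maxAngle P R ≤ maxAngle P Q + maxAngle Q R := by
  rcases le_or_gt (π / 2) (maxAngle P Q + maxAngle Q R) with hge | hlt
  · exact (arcsin_le_pi_div_two _).trans hge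
  have hnonneg := add_nonneg (maxAngle_nonneg P Q) (maxAngle_nonneg Q R)
  refine arcsin_le_iff_le_sin' ⟨by linarith [pi_pos], hlt⟩ |>.2 ?_
  refine norm_sub_le_of_isStarProjection hP hR ?_ ?_
  · exact norm_one_sub_mul_le_sin hP hR hnonneg hlt.le fun x hx hx0 =>
      realAngle_apply_le_maxAngle_add_maxAngle hP hQ hx hx0
  · refine norm_one_sub_mul_le_sin hR hP hnonneg hlt.le fun x hx hx0 => ?_
    rw [add_comm, maxAngle_comm P, maxAngle_comm Q]
    exact realAngle_apply_le_maxAngle_add_maxAngle hR hQ hx hx0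

end MaximalAngle

section AngleAlongPath

variable {f f' : ℝ → ℝ} {a b : ℝ}

lemma continuousOn_of_norm_sub_le {F : Type*} [SeminormedAddCommGroup F] {P : ℝ → F}
    (hf : ContinuousOn f (Icc a b))
    (hPf : ∀ s ∈ Icc a b, ∀ t ∈ Icc s b, ‖P s - P t‖ ≤ f t - f s) : ContinuousOn P (Icc a b) := by
  intro s hs
  refine tendsto_iff_norm_sub_tendsto_zero.2 ?_
  have hlim : Tendsto (fun t => |f t - f s|) (𝓝[Icc a b] s) (𝓝 0) := by
    simpa using ((hf s hs).sub_const (f s)).abs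
  refine squeeze_zero' (.of_forall fun _ => norm_nonneg _) ?_ hlim
  filter_upwards [self_mem_nhdsWithin] with t ht
  rcases le_total s t with hst | hts
  · rw [norm_sub_rev]
    exact (hPf s hs t ⟨hst, ht.2⟩).trans (le_abs_self _)
  · rw [abs_sub_comm]
    exact (hPf t ht s ⟨hts, hs.2⟩).trans (le_abs_self _)

variable {𝕜 E : Type*} [RCLike 𝕜] [NormedAddCommGroup E] [InnerProductSpace 𝕜 E] [CompleteSpace E]
  {P : ℝ → E →L[𝕜] E}

theorem maxAngle_le_of_norm_sub_le (hab : a ≤ b) (hP : ∀ t ∈ Icc a b, IsStarProjection (P t))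
    (hf : ContinuousOn f (Icc a b)) (hf' : ∀ t ∈ Ico a b, HasDerivWithinAt f (f' t) (Ici t) t)
    (hPf : ∀ s ∈ Icc a b, ∀ t ∈ Icc s b, ‖P s - P t‖ ≤ f t - f s) :
    maxAngle (P a) (P b) ≤ f b - f a := by
  have hcont : ContinuousOn (fun t => maxAngle (P a) (P t)) (Icc a b) :=
    continuous_arcsin.comp_continuousOn
      (continuousOn_const.sub (continuousOn_of_norm_sub_le hf hPf)).norm
  refine image_le_of_liminf_slope_right_le_deriv_boundary (B := fun t => f t - f a) hcont
    (by simp [maxAngle]) (hf.sub continuousOn_const) (fun t ht => (hf' t ht).sub_const _)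
    (fun s hs r hr => ?_) (right_mem_Icc.2 hab)
  have hderiv : HasDerivWithinAt (fun t => arcsin (f t - f s)) (f' s) (Ici s) s := by
    have harcsin : HasDerivAt arcsin 1 (f s - f s) := by
      simpa using hasDerivAt_arcsin (x := 0) (by norm_num) (by norm_num)
    simpa [Function.comp_def] using harcsin.comp_hasDerivWithinAt s ((hf' s hs).sub_const (f s))
  have hslope : ∀ᶠ t in 𝓝[>] s, slope (fun t => arcsin (f t - f s)) s t < r := by
    have h := hasDerivWithinAt_iff_tendsto_slope.1 hderiv
    rw [Ici_sdiff_left] at h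
    exact h.eventually_lt_const hr
  refine Eventually.frequently ?_
  filter_upwards [hslope, Ioo_mem_nhdsGT hs.2] with t ht hst
  refine lt_of_le_of_lt ?_ ht
  have hsI : s ∈ Icc a b := ⟨hs.1, hs.2.le⟩
  have htI : t ∈ Icc a b := ⟨hs.1.trans hst.1.le, hst.2.le⟩
  have hangle : maxAngle (P s) (P t) ≤ arcsin (f t - f s) :=
    monotone_arcsin (hPf s hsI t ⟨hst.1.le, hst.2.le⟩)
  have htri := maxAngle_triangle (hP a (left_mem_Icc.2 hab)) (hP s hsI) (hP t htI)
  rw [slope_def_field, slope_def_field, sub_self, arcsin_zero, sub_zero]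
  have := sub_pos.2 hst.1
  gcongr
  linarith

end AngleAlongPath

section SpectralStability

lemma continuousOn_indicator_const_of_le_dist {X Y : Type*} [PseudoMetricSpace X]
    [PseudoMetricSpace Y] [Zero Y] {S s : Set X} {δ : ℝ} (hδ : 0 < δ)
    (hS : ∀ x ∈ s, x ∈ S → ∀ y ∈ s, y ∉ S → δ ≤ dist x y) (c : Y) :
    ContinuousOn (S.indicator fun _ => c) s := by
  refine Metric.continuousOn_iff.2 fun x hx ε hε => ⟨δ, hδ, fun y hy hyx => ?_⟩
  by_cases hxS : x ∈ S <;> by_cases hyS : y ∈ S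
  · simpa [hxS, hyS] using hε
  · exact absurd (hS x hx hxS y hy hyS) (not_le.2 (dist_comm x y ▸ hyx))
  · exact absurd (hS y hy hyS x hx hxS) (not_le.2 hyx)
  · simpa [hxS, hyS] using hε

lemma exists_mem_spectrum_abs_sub_le {𝒜 : Type*} [CStarAlgebra 𝒜] {a e : 𝒜} {l : ℝ}
    (ha : IsSelfAdjoint a) (hl : l ∈ spectrum ℝ (a + e)) :
    ∃ m ∈ spectrum ℝ a, |l - m| ≤ ‖e‖ := by
  by_contra! hfar
  rcases eq_or_ne e 0 with rfl | he
  · rw [add_zero] at hl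
    simpa using hfar l hl
  have he_pos : 0 < ‖e‖ := norm_pos_iff.2 he
  have hne : ∀ m ∈ spectrum ℝ a, l - m ≠ 0 := fun m hm =>
    abs_pos.1 (he_pos.trans (hfar m hm))
  let u : 𝒜ˣ := cfcUnits (fun m => l - m) a hne
  have hu : (u : 𝒜) = algebraMap ℝ 𝒜 l - a := by
    change cfc (fun m => l - m) a = _
    rw [cfc_sub _ _ a, cfc_const l a, cfc_id' ℝ a]
  have hu_inv : ‖(↑u⁻¹ : 𝒜)‖ < ‖e‖⁻¹ := by
    refine norm_cfc_lt (by positivity) fun m hm => ?_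
    rw [norm_inv]
    exact inv_strictAnti₀ he_pos (hfar m hm)
  have hunit : IsUnit (algebraMap ℝ 𝒜 l - (a + e)) := by
    have hsmall : ‖(u - e : 𝒜) - u‖ < ‖(↑u⁻¹ : 𝒜)‖⁻¹ := by
      rw [sub_sub_cancel_left, norm_neg]
      have := nontrivial_of_ne e 0 he
      exact (lt_inv_comm₀ he_pos u⁻¹.norm_pos).2 hu_inv
    rw [← sub_sub, ← hu]
    exact (u.ofNearby _ hsmall).isUnit
  exact hl hunit

variable {H : Type*} [NormedAddCommGroup H] [InnerProductSpace ℂ H] [CompleteSpace H]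
  {A B : H →L[ℂ] H} {S : Set ℝ} {δ : ℝ}

lemma isStarProjection_spectralProj
    (hS : ContinuousOn (S.indicator fun _ => (1 : ℝ)) (spectrum ℝ B)) :
    IsStarProjection (spectralProj B S) where
  isIdempotentElem := by
    rw [IsIdempotentElem, spectralProj, ← cfc_mul _ _ B hS hS]
    congr 1
    ext x
    by_cases hx : x ∈ S <;> simp [hx]
  isSelfAdjoint := cfc_predicate _ _

lemma one_sub_spectralProj (hB : IsSelfAdjoint B)
    (hS : ContinuousOn (S.indicator fun _ => (1 : ℝ)) (spectrum ℝ B)) :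
    1 - spectralProj B S = spectralProj B Sᶜ := by
  rw [spectralProj, spectralProj, ← cfc_const_one ℝ B, ← cfc_sub _ _ B continuousOn_const hS]
  congr 1
  exact (Set.indicator_compl S fun _ : ℝ => (1 : ℝ)).symm

theorem norm_spectralProj_sub_spectralProj_le (hA : IsSelfAdjoint A) (hB : IsSelfAdjoint B)
    (hSA : ContinuousOn (S.indicator fun _ => (1 : ℝ)) (spectrum ℝ A))
    (hSB : ContinuousOn (S.indicator fun _ => (1 : ℝ)) (spectrum ℝ B)) (hδ : 0 < δ)
    (hAB : ∀ x ∈ spectrum ℝ A, x ∈ S → ∀ y ∈ spectrum ℝ B, y ∉ S → δ ≤ |x - y|)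
    (hBA : ∀ x ∈ spectrum ℝ B, x ∈ S → ∀ y ∈ spectrum ℝ A, y ∉ S → δ ≤ |x - y|) :
    ‖spectralProj A S - spectralProj B S‖ ≤ π / 2 * ‖A - B‖ / δ := by
  have off_diag {A B : H →L[ℂ] H} (hA : IsSelfAdjoint A) (hB : IsSelfAdjoint B)
      (hSA : ContinuousOn (S.indicator fun _ => (1 : ℝ)) (spectrum ℝ A))
      (hSB : ContinuousOn (S.indicator fun _ => (1 : ℝ)) (spectrum ℝ B))
      (hBA : ∀ x ∈ spectrum ℝ B, x ∈ S → ∀ y ∈ spectrum ℝ A, y ∉ S → δ ≤ |x - y|) :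
      ‖(1 - spectralProj A S) * spectralProj B S‖ ≤ π / 2 * ‖A - B‖ / δ := by
    have hScA : ContinuousOn (Sᶜ.indicator fun _ => (1 : ℝ)) (spectrum ℝ A) := by
      rw [Set.indicator_compl]
      exact continuousOn_const.sub hSA
    rw [le_div_iff₀' hδ, one_sub_spectralProj hA hSA]
    simpa [spectralProj] using norm_cfc_indicator_mul_mul_le hA hB hScA hSB hδ
      (fun x hx hxS y hy hyS => abs_sub_comm x y ▸ hBA y hy hyS x hx hxS) 1
  exact norm_sub_le_of_isStarProjection (isStarProjection_spectralProj hSA)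
    (isStarProjection_spectralProj hSB) (off_diag hA hB hSA hSB hBA)
    (norm_sub_rev B A ▸ off_diag hB hA hSB hSA hAB)

end SpectralStability

section LinearPath

variable {𝒜 : Type*} [CStarAlgebra 𝒜] {a e e' : 𝒜} {ω Ω : Set ℝ} {d x y : ℝ}

lemma setDist_le_dist {s t : Set ℝ} (hx : x ∈ s) (hy : y ∈ t) : setDist s t ≤ dist x y := by
  refine csInf_le ⟨0, ?_⟩ (mem_image2_of_mem hx hy)
  rintro _ ⟨a, _, b, _, rfl⟩
  exact dist_nonneg

lemma exists_mem_abs_sub_le_of_mem_thickening (ha : IsSelfAdjoint a)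
    (hspec : spectrum ℝ a = ω ∪ Ω) (he : ‖e‖ < setDist ω Ω / 2) (hx : x ∈ spectrum ℝ (a + e))
    (hxω : x ∈ Metric.thickening (setDist ω Ω / 2) ω) : ∃ m ∈ ω, |x - m| ≤ ‖e‖ := by
  obtain ⟨m, hm, hxm⟩ := exists_mem_spectrum_abs_sub_le ha hx
  obtain ⟨z, hz, hxz⟩ := Metric.mem_thickening_iff.1 hxω
  rw [hspec] at hm
  refine ⟨m, hm.resolve_right fun hmΩ => ?_, hxm⟩
  have hzm : setDist ω Ω ≤ dist z m := setDist_le_dist hz hmΩ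
  linarith [dist_triangle_left z m x, Real.dist_eq x m]

lemma exists_mem_abs_sub_le_of_notMem_thickening (ha : IsSelfAdjoint a)
    (hspec : spectrum ℝ a = ω ∪ Ω) (he : ‖e‖ < setDist ω Ω / 2) (hx : x ∈ spectrum ℝ (a + e))
    (hxω : x ∉ Metric.thickening (setDist ω Ω / 2) ω) : ∃ m ∈ Ω, |x - m| ≤ ‖e‖ := by
  obtain ⟨m, hm, hxm⟩ := exists_mem_spectrum_abs_sub_le ha hx
  rw [hspec] at hm
  exact ⟨m, hm.resolve_left fun hmω =>
    hxω (Metric.mem_thickening_iff.2 ⟨m, hmω, hxm.trans_lt he⟩), hxm⟩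

lemma setDist_sub_norm_sub_norm_le (ha : IsSelfAdjoint a) (hspec : spectrum ℝ a = ω ∪ Ω)
    (he : ‖e‖ < setDist ω Ω / 2) (he' : ‖e'‖ < setDist ω Ω / 2)
    (hx : x ∈ spectrum ℝ (a + e)) (hxω : x ∈ Metric.thickening (setDist ω Ω / 2) ω)
    (hy : y ∈ spectrum ℝ (a + e')) (hyω : y ∉ Metric.thickening (setDist ω Ω / 2) ω) :
    setDist ω Ω - ‖e‖ - ‖e'‖ ≤ |x - y| := by
  obtain ⟨m, hm, hxm⟩ := exists_mem_abs_sub_le_of_mem_thickening ha hspec he hx hxω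
  obtain ⟨n, hn, hyn⟩ := exists_mem_abs_sub_le_of_notMem_thickening ha hspec he' hy hyω
  have hmn : setDist ω Ω ≤ |m - n| := setDist_le_dist hm hn
  linarith [abs_sub_le m x n, abs_sub_le x y n, abs_sub_comm m x]

lemma continuousOn_indicator_thickening (ha : IsSelfAdjoint a) (hspec : spectrum ℝ a = ω ∪ Ω)
    (he : ‖e‖ < setDist ω Ω / 2) :
    ContinuousOn ((Metric.thickening (setDist ω Ω / 2) ω).indicator fun _ => (1 : ℝ))
      (spectrum ℝ (a + e)) :=
  continuousOn_indicator_const_of_le_dist (δ := setDist ω Ω - ‖e‖ - ‖e‖) (by linarith)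
    (fun _ hx hxω _ hy hyω => setDist_sub_norm_sub_norm_le ha hspec he he hx hxω hy hyω) _

lemma two_mul_sub_div_add_le_log_sub_log {p q : ℝ} (hq : 0 < q) (hqp : q ≤ p) :
    2 * (p - q) / (p + q) ≤ log p - log q := by
  have h := le_log_one_add_of_nonneg (div_nonneg (sub_nonneg.2 hqp) hq.le)
  rw [← log_div (hq.trans_le hqp).ne' hq.ne']
  convert h using 1
  · field_simp
    ring
  · congr 1
    field_simp
    ring

variable {H : Type*} [NormedAddCommGroup H] [InnerProductSpace ℂ H] [CompleteSpace H]
  {A E F V : H →L[ℂ] H}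

lemma norm_spectralProj_add_sub_spectralProj_add_le (hA : IsSelfAdjoint A) (hE : IsSelfAdjoint E)
    (hF : IsSelfAdjoint F) (hspec : spectrum ℝ A = ω ∪ Ω) (hE_lt : ‖E‖ < setDist ω Ω / 2)
    (hF_lt : ‖F‖ < setDist ω Ω / 2) :
    ‖spectralProj (A + E) (Metric.thickening (setDist ω Ω / 2) ω) -
      spectralProj (A + F) (Metric.thickening (setDist ω Ω / 2) ω)‖ ≤
      π / 2 * ‖E - F‖ / (setDist ω Ω - ‖E‖ - ‖F‖) := by
  rw [← add_sub_add_left_eq_sub E F A]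
  refine norm_spectralProj_sub_spectralProj_le (hA.add hE) (hA.add hF)
    (continuousOn_indicator_thickening hA hspec hE_lt)
    (continuousOn_indicator_thickening hA hspec hF_lt) (by linarith)
    (fun x hx hxω y hy hyω => setDist_sub_norm_sub_norm_le hA hspec hE_lt hF_lt hx hxω hy hyω)
    (fun x hx hxω y hy hyω => ?_)
  rw [sub_right_comm]
  exact setDist_sub_norm_sub_norm_le hA hspec hF_lt hE_lt hx hxω hy hyω

lemma spectralProj_eq_spectralProj_thickening (hspec : spectrum ℝ A = ω ∪ Ω)
    (hd : 0 < setDist ω Ω) :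
    spectralProj A ω = spectralProj A (Metric.thickening (setDist ω Ω / 2) ω) := by
  refine cfc_congr fun x hx => ?_
  rcases hspec ▸ hx with hxω | hxΩ
  · have hx_mem := Metric.self_subset_thickening (half_pos hd) ω hxω
    simp only [indicator_of_mem hxω, indicator_of_mem hx_mem]
  · have hx_notMem : x ∉ Metric.thickening (setDist ω Ω / 2) ω := fun hx_mem => by
      obtain ⟨z, hz, hxz⟩ := Metric.mem_thickening_iff.1 hx_mem
      linarith [setDist_le_dist hz hxΩ, dist_comm x z]
    have hxω : x ∉ ω := fun h => hx_notMem (Metric.self_subset_thickening (half_pos hd) ω h)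
    simp only [indicator_of_notMem hxω, indicator_of_notMem hx_notMem]

lemma norm_spectralProj_add_smul_sub_le {s t : ℝ} (hA : IsSelfAdjoint A) (hV : IsSelfAdjoint V)
    (hspec : spectrum ℝ A = ω ∪ Ω) (hV_lt : ‖V‖ < setDist ω Ω / 2) (hs : 0 ≤ s) (hst : s ≤ t)
    (ht : t ≤ 1) :
    ‖spectralProj (A + s • V) (Metric.thickening (setDist ω Ω / 2) ω) -
      spectralProj (A + t • V) (Metric.thickening (setDist ω Ω / 2) ω)‖ ≤
      π / 4 * (log (setDist ω Ω - 2 * s * ‖V‖) - log (setDist ω Ω - 2 * t * ‖V‖)) := by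
  have hnorm {r : ℝ} (hr : 0 ≤ r) : ‖r • V‖ = r * ‖V‖ := by rw [norm_smul, norm_of_nonneg hr]
  have hsV : s * ‖V‖ ≤ t * ‖V‖ := by gcongr
  have htV : t * ‖V‖ < setDist ω Ω / 2 := (mul_le_of_le_one_left (norm_nonneg _) ht).trans_lt hV_lt
  calc _ ≤ π / 2 * ‖s • V - t • V‖ / (setDist ω Ω - ‖s • V‖ - ‖t • V‖) :=
        norm_spectralProj_add_sub_spectralProj_add_le hA (.smul (.all s) hV) (.smul (.all t) hV)
          hspec (by rw [hnorm hs]; linarith) (by rw [hnorm (hs.trans hst)]; linarith)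
    _ = π / 4 * (2 * ((setDist ω Ω - 2 * s * ‖V‖) - (setDist ω Ω - 2 * t * ‖V‖)) /
          ((setDist ω Ω - 2 * s * ‖V‖) + (setDist ω Ω - 2 * t * ‖V‖))) := by
        rw [norm_sub_rev, ← sub_smul, hnorm (sub_nonneg.2 hst), hnorm hs, hnorm (hs.trans hst),
          show (setDist ω Ω - 2 * s * ‖V‖) + (setDist ω Ω - 2 * t * ‖V‖) =
            2 * (setDist ω Ω - s * ‖V‖ - t * ‖V‖) by ring]
        have : setDist ω Ω - s * ‖V‖ - t * ‖V‖ ≠ 0 := by linarith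
        field_simp
        ring
    _ ≤ _ := by
        gcongr
        exact two_mul_sub_div_add_le_log_sub_log (by linarith) (by linarith)

theorem maxAngle_spectralProj_le (hA : IsSelfAdjoint A) (hV : IsSelfAdjoint V)
    (hspec : spectrum ℝ A = ω ∪ Ω) (hV_lt : ‖V‖ < setDist ω Ω / 2) :
    maxAngle (spectralProj A ω) (spectralProj (A + V) (Metric.thickening (setDist ω Ω / 2) ω)) ≤
      π / 4 * log (setDist ω Ω / (setDist ω Ω - 2 * ‖V‖)) := by
  set d := setDist ω Ω
  have hd_pos : 0 < d := by linarith [norm_nonneg V]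
  have hpos {t : ℝ} (ht : t ∈ Icc (0 : ℝ) 1) : 0 < d - 2 * t * ‖V‖ := by
    nlinarith [norm_nonneg V, ht.2]
  have hderiv (t : ℝ) (ht : t ∈ Icc (0 : ℝ) 1) :
      HasDerivAt (fun t => -(π / 4) * log (d - 2 * t * ‖V‖))
        (-(π / 4) * (-(2 * ‖V‖) / (d - 2 * t * ‖V‖))) t := by
    have hlin : HasDerivAt (fun t => d - 2 * t * ‖V‖) (-(2 * ‖V‖)) t := by
      simpa using (((hasDerivAt_id t).const_mul 2).mul_const ‖V‖).const_sub d
    exact (hlin.log (hpos ht).ne').const_mul _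
  have hproj (t : ℝ) (ht : t ∈ Icc (0 : ℝ) 1) :
      IsStarProjection (spectralProj (A + t • V) (Metric.thickening (d / 2) ω)) := by
    refine isStarProjection_spectralProj (continuousOn_indicator_thickening hA hspec ?_)
    rw [norm_smul, norm_of_nonneg ht.1]
    linarith [hpos ht]
  have h := maxAngle_le_of_norm_sub_le zero_le_one hproj
    (fun t ht => (hderiv t ht).continuousAt.continuousWithinAt)
    (fun t ht => (hderiv t (Ico_subset_Icc_self ht)).hasDerivWithinAt) fun s hs t ht => by
      linarith [norm_spectralProj_add_smul_sub_le hA hV hspec hV_lt hs.1 ht.1 ht.2]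
  rw [zero_smul, one_smul, add_zero, ← spectralProj_eq_spectralProj_thickening hspec hd_pos] at h
  rw [log_div hd_pos.ne' (by linarith)]
  refine h.trans_eq ?_
  simp only [mul_zero, zero_mul, sub_zero, mul_one]
  ring

end LinearPath

lemma sinh_one_div_exp_one : sinh 1 / exp 1 = (1 - exp (-2)) / 2 := by
  rw [sinh_eq, show (-2 : ℝ) = -1 + -1 by norm_num, exp_add, exp_neg]
  field_simp

lemma log_div_sub_two_mul_lt_two {d v : ℝ} (hd : 0 < d) (hv : v < sinh 1 / exp 1 * d) :
    log (d / (d - 2 * v)) < 2 := by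
  rw [sinh_one_div_exp_one] at hv
  have hgap : exp (-2) * d < d - 2 * v := by linarith
  have hgap_pos : 0 < d - 2 * v := (by positivity : 0 < exp (-2) * d).trans hgap
  rw [log_lt_iff_lt_exp (by positivity), div_lt_iff₀ hgap_pos]
  calc d = exp 2 * (exp (-2) * d) := by rw [← mul_assoc, ← exp_add]; simp
    _ < exp 2 * (d - 2 * v) := by gcongr

lemma sinh_one_div_exp_one_lt_half : sinh 1 / exp 1 < 1 / 2 := by
  rw [sinh_one_div_exp_one]
  linarith [exp_pos (-2)]

theorem subspace_perturbation_general_general {H : Type*} [NormedAddCommGroup H]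
    [InnerProductSpace ℂ H] [CompleteSpace H]
    (A V : H →L[ℂ] H) (hA : IsSelfAdjoint A) (hV : IsSelfAdjoint V)
    (ω Ω : Set ℝ) (hspec : spectrum ℝ A = ω ∪ Ω)
    (d : ℝ) (hd : d = setDist ω Ω)
    (hVn : ‖V‖ < (Real.sinh 1 / Real.exp 1) * d) :
    ‖spectralProj A ω - spectralProj (A + V) (Metric.thickening (d / 2) ω)‖ ≤
        Real.sin ((Real.pi / 4) * Real.log (d / (d - 2 * ‖V‖))) ∧
      Real.sin ((Real.pi / 4) * Real.log (d / (d - 2 * ‖V‖))) < 1 := by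
  subst hd
  set d := setDist ω Ω
  have hd_pos : 0 < d := pos_of_mul_pos_right ((norm_nonneg V).trans_lt hVn) (by positivity)
  have hV_lt : ‖V‖ < d / 2 := hVn.trans (by nlinarith [sinh_one_div_exp_one_lt_half])
  have hangle := maxAngle_spectralProj_le hA hV hspec hV_lt
  have hα_nonneg : 0 ≤ π / 4 * log (d / (d - 2 * ‖V‖)) := (maxAngle_nonneg _ _).trans hangle
  have hα_lt : π / 4 * log (d / (d - 2 * ‖V‖)) < π / 2 := by
    linarith [mul_lt_mul_of_pos_left (log_div_sub_two_mul_lt_two hd_pos hVn)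
      (div_pos pi_pos four_pos)]
  have hα_gt : -(π / 2) ≤ π / 4 * log (d / (d - 2 * ‖V‖)) := by linarith [pi_pos]
  refine ⟨(arcsin_le_iff_le_sin' ⟨hα_gt, hα_lt⟩).1 hangle, ?_⟩
  exact (sin_lt_sin_of_lt_of_le_pi_div_two hα_gt le_rfl hα_lt).trans_eq sin_pi_div_two

/-- Let `A, V` be bounded self-adjoint operators, `spec(A) = ω ∪ Ω` with
`d := dist(ω,Ω) > 0`, and `‖V‖ < (sinh 1 / e)·d`. Then, with `P` the spectral projection of
`A` associated with `ω` and `Q` the spectral projection of `A + V` associated with the part of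
its spectrum in the open `d/2`-neighborhood `O_{d/2}(ω)` of `ω`,
`‖P − Q‖ ≤ sin((π/4)·log(d/(d − 2‖V‖))) < 1`. -/
theorem subspace_perturbation_general {H : Type*} [NormedAddCommGroup H]
    [InnerProductSpace ℂ H] [CompleteSpace H] [TopologicalSpace.SeparableSpace H]
    (A V : H →L[ℂ] H) (hA : IsSelfAdjoint A) (hV : IsSelfAdjoint V)
    (ω Ω : Set ℝ) (hω : ω.Nonempty) (hΩ : Ω.Nonempty)
    (hωc : IsClosed ω) (hΩc : IsClosed Ω)
    (hspec : spectrum ℝ A = ω ∪ Ω)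
    (d : ℝ) (hd : d = setDist ω Ω) (hdpos : 0 < d)
    (hVn : ‖V‖ < (Real.sinh 1 / Real.exp 1) * d) :
    ‖spectralProj A ω - spectralProj (A + V) (Metric.thickening (d / 2) ω)‖ ≤
        Real.sin ((Real.pi / 4) * Real.log (d / (d - 2 * ‖V‖))) ∧
      Real.sin ((Real.pi / 4) * Real.log (d / (d - 2 * ‖V‖))) < 1 := by
  exact subspace_perturbation_general_general A V hA hV ω Ω hspec d hd hVn
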